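/- Let f(X) = 2X(X² − 1) ∈ ℚ[X]. Then the set {α ∈ ℚ : there exist an integer n ≥ 1, an integer ℓ with ℓ ≠ 0 and ℓ ≠ 1, and a ∈ ℤ such that f^(n)(α) = a^ℓ · α} is infinite; indeed, already the set {r ∈ ℤ : f(r) = a² · r for some a ∈ ℤ} is infinite, since f(r) = (2s)² · r for every pair of integers (r, s) with r² − 2s² = 1. -/

import Mathlib

open Polynomial

lemma pell_large (N : ℕ) : ∃ r s : ℤ, r ^ 2 - 2 * s ^ 2 = 1 ∧ (N : ℤ) < r ∧ 0 ≤ s := by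
  induction N with
  | zero => exact ⟨1, 0, by norm_num, by norm_num, le_rfl⟩
  | succ k ih =>
    obtain ⟨r, s, h, hr, hs⟩ := ih
    refine ⟨3 * r + 4 * s, 2 * r + 3 * s, by linarith [h, show (3 * r + 4 * s) ^ 2 - 2 * (2 * r + 3 * s) ^ 2 = r ^ 2 - 2 * s ^ 2 by ring], ?_, ?_⟩
    · push_cast; omega
    · omega

theorem stmt_10 (f : Polynomial ℚ) (hf : f = C 2 * X * (X ^ 2 - 1)) :
    {α : ℚ | ∃ (n : ℕ) (ℓ : ℤ) (a : ℤ), 1 ≤ n ∧ ℓ ≠ 0 ∧ ℓ ≠ 1 ∧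
      (ℓ < 0 → (a : ℚ) ≠ 0) ∧ f.eval^[n] α = (a : ℚ) ^ ℓ * α}.Infinite ∧
    {r : ℤ | ∃ a : ℤ, f.eval (r : ℚ) = (a : ℚ) ^ 2 * (r : ℚ)}.Infinite ∧
    ∀ r s : ℤ, r ^ 2 - 2 * s ^ 2 = 1 →
      f.eval (r : ℚ) = ((2 * s : ℤ) : ℚ) ^ 2 * (r : ℚ) := by
  have h3 : ∀ r s : ℤ, r ^ 2 - 2 * s ^ 2 = 1 →
      f.eval (r : ℚ) = ((2 * s : ℤ) : ℚ) ^ 2 * (r : ℚ) := by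
    intro r s h
    have h' : (r : ℚ) ^ 2 - 2 * (s : ℚ) ^ 2 = 1 := by exact_mod_cast h
    subst hf
    simp only [eval_mul, eval_C, eval_X, eval_sub, eval_pow, eval_one]
    push_cast
    linear_combination 2 * (r : ℚ) * h'
  have h2 : {r : ℤ | ∃ a : ℤ, f.eval (r : ℚ) = (a : ℚ) ^ 2 * (r : ℚ)}.Infinite := by
    apply Set.infinite_of_forall_exists_gt
    intro N
    obtain ⟨r, s, h, hr, -⟩ := pell_large N.toNat
    exact ⟨r, ⟨2 * s, h3 r s h⟩, by omega⟩
  refine ⟨?_, h2, h3⟩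
  refine (h2.image (f := fun r : ℤ => (r : ℚ)) (Int.cast_injective.injOn)).mono ?_
  rintro _ ⟨r, ⟨a, ha⟩, rfl⟩
  refine ⟨1, 2, a, le_rfl, by norm_num, by norm_num, by norm_num, ?_⟩
  rw [Function.iterate_one]
  beta_reduce
  exact_mod_cast ha
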